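/- Part (7) of Lemma 5: 4·(1 + η₁ + 2η₀ + 3η₃)·(1 + η₃ + 2η₂ + 3η₁) ≡ 2(1+4y)·H + 5p + 1 (mod (4^p − 1)/3). -/

import Mathlib

open Finset

/-- The cyclotomic class `D_i` of order 4 modulo `p` with respect to the
primitive root `θ`: `{θ^(i+4j) mod p : 0 ≤ j < (p-1)/4}`. -/
def cycD (p θ i : ℕ) : Finset ℕ :=
  (Finset.range ((p - 1) / 4)).image fun j => θ ^ (i + 4 * j) % p

/-- `η_i = Σ_{t ∈ D_i} 4^t` as an integer. -/
def eta4 (p θ : ℕ) (i : ℕ) : ℤ := ∑ t ∈ cycD p θ i, (4 : ℤ) ^ t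

/-- `H = η₀ + η₂ − η₁ − η₃`. -/
def Hval (p θ : ℕ) : ℤ := eta4 p θ 0 + eta4 p θ 2 - eta4 p θ 1 - eta4 p θ 3


lemma aux_pow (p θ : ℕ) [Fact p.Prime] (hθ : IsPrimitiveRoot (θ : ZMod p) (p - 1))
    (u : ZMod p) (hu : u ≠ 0) : ∃ k, k < p - 1 ∧ (θ : ZMod p) ^ k = u := by
  have hp2 := (Fact.out : p.Prime).two_le
  have : NeZero (p - 1) := ⟨by omega⟩
  exact hθ.eq_pow_of_pow_eq_one (ZMod.pow_card_sub_one_eq_one hu)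

lemma aux_chi (p θ : ℕ) [Fact p.Prime] (hp8 : p % 8 = 5)
    (hθ : IsPrimitiveRoot (θ : ZMod p) (p - 1)) :
    ∃ χ : MulChar (ZMod p) ℂ, χ (θ : ZMod p) = Complex.I := by
  have h0 : (θ : ZMod p) ≠ 0 := hθ.ne_zero (by omega)
  let g : (ZMod p)ˣ := Units.mk0 (θ : ZMod p) h0
  have hg : ∀ x, x ∈ Subgroup.zpowers g := by
    intro x
    obtain ⟨k, -, hk⟩ := aux_pow p θ hθ (x : ZMod p) x.ne_zero
    refine ⟨k, ?_⟩
    ext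
    simp [g, hk]
  let z : ℂˣ := Units.mk0 Complex.I Complex.I_ne_zero
  have hz : z ∈ rootsOfUnity (Fintype.card (ZMod p)ˣ) ℂ := by
    rw [mem_rootsOfUnity, ZMod.card_units]
    ext
    obtain ⟨m, hm⟩ : ∃ m, p - 1 = 4 * m := ⟨(p - 1) / 4, by omega⟩
    simp [z, hm, pow_mul]
  refine ⟨MulChar.ofRootOfUnity hz hg, ?_⟩
  have := MulChar.ofRootOfUnity_spec hz hg
  simpa [g, z] using this

lemma aux_I4 (k : ℕ) : Complex.I ^ k = Complex.I ^ (k % 4) := by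
  conv_lhs => rw [← Nat.div_add_mod k 4, pow_add, pow_mul]
  simp

lemma aux_Iinj (i j : ℕ) (hi : i < 4) (hj : j < 4) (h : Complex.I ^ i = Complex.I ^ j) :
    i = j := by
  have hI : IsPrimitiveRoot Complex.I 4 := by
    exact IsPrimitiveRoot.mk_of_lt _ (by norm_num) (by simp) (by
      intro l h0 h4
      interval_cases l <;> simp [Complex.ext_iff, pow_succ] <;> norm_num)
  exact hI.pow_inj hi hj h

lemma aux_val (p θ : ℕ) [Fact p.Prime] (hθ : IsPrimitiveRoot (θ : ZMod p) (p - 1))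
    (χ : MulChar (ZMod p) ℂ) (hχ : χ (θ : ZMod p) = Complex.I)
    (u : ZMod p) (hu : u ≠ 0) : ∃ k, k < 4 ∧ χ u = Complex.I ^ k := by
  obtain ⟨k, -, hk⟩ := aux_pow p θ hθ u hu
  refine ⟨k % 4, Nat.mod_lt _ (by norm_num), ?_⟩
  rw [← hk, map_pow, hχ, aux_I4]

lemma aux_mem (p θ : ℕ) [Fact p.Prime] (hp8 : p % 8 = 5)
    (hθ : IsPrimitiveRoot (θ : ZMod p) (p - 1))
    (χ : MulChar (ZMod p) ℂ) (hχ : χ (θ : ZMod p) = Complex.I) (i : ℕ) (hi : i < 4) (t : ℕ) :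
    t ∈ cycD p θ i ↔ t < p ∧ χ (t : ZMod p) = Complex.I ^ i := by
  have hp0 : 0 < p := (Fact.out : p.Prime).pos
  unfold cycD
  simp only [Finset.mem_image, Finset.mem_range]
  constructor
  · rintro ⟨j, hj, rfl⟩
    refine ⟨Nat.mod_lt _ hp0, ?_⟩
    rw [ZMod.natCast_mod]
    push_cast
    rw [map_pow, hχ, pow_add, pow_mul]
    simp
  · rintro ⟨ht, h⟩
    have hu : (t : ZMod p) ≠ 0 := by
      intro h0
      rw [h0, MulChar.map_zero] at h
      exact pow_ne_zero _ Complex.I_ne_zero h.symm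
    obtain ⟨k, hk, hk2⟩ := aux_pow p θ hθ (t : ZMod p) hu
    rw [← hk2, map_pow, hχ, aux_I4] at h
    have := aux_Iinj _ _ (Nat.mod_lt _ (by norm_num)) hi h
    refine ⟨k / 4, by omega, ?_⟩
    have e : i + 4 * (k / 4) = k := by omega
    rw [e]
    have h3 : ((θ ^ k : ℕ) : ZMod p) = (t : ℕ) := by push_cast; exact hk2
    rw [ZMod.natCast_eq_natCast_iff'] at h3
    rw [h3, Nat.mod_eq_of_lt ht]

lemma aux_sum_range (p : ℕ) [Fact p.Prime] (F : ZMod p → ℂ) :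
    ∑ u, F u = ∑ t ∈ Finset.range p, F (t : ZMod p) := by
  symm
  refine Finset.sum_nbij' (fun t => (t : ZMod p)) (fun u => u.val) ?_ ?_ ?_ ?_ ?_
  · simp
  · intro u _; simpa using ZMod.val_lt u
  · intro t ht; exact ZMod.val_cast_of_lt (by simpa using ht)
  · intro u _; simp
  · simp

lemma aux_decomp (p θ : ℕ) [Fact p.Prime] (hp8 : p % 8 = 5)
    (hθ : IsPrimitiveRoot (θ : ZMod p) (p - 1))
    (χ : MulChar (ZMod p) ℂ) (hχ : χ (θ : ZMod p) = Complex.I)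
    (F : ZMod p → ℂ) (hF : F 0 = 0) :
    ∑ u, F u = ∑ i ∈ Finset.range 4, ∑ t ∈ cycD p θ i, F (t : ZMod p) := by
  have h1 : ∀ i ∈ Finset.range 4, ∑ t ∈ cycD p θ i, F (t : ZMod p) =
      ∑ t ∈ Finset.range p, if χ (t : ZMod p) = Complex.I ^ i then F (t : ZMod p) else 0 := by
    intro i hi
    rw [← Finset.sum_filter]
    congr 1
    ext t
    rw [aux_mem p θ hp8 hθ χ hχ i (by simpa using hi)]
    simp
  rw [Finset.sum_congr rfl h1, Finset.sum_comm, aux_sum_range]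
  refine Finset.sum_congr rfl fun t _ => ?_
  by_cases h0 : (t : ZMod p) = 0
  · simp [h0, hF]
  · obtain ⟨k, hk, hk2⟩ := aux_val p θ hθ χ hχ _ h0
    rw [Finset.sum_eq_single k]
    · simp [hk2]
    · intro b hb hbk
      rw [if_neg]
      intro h
      exact hbk (aux_Iinj b k (by simpa using hb) hk (by rw [← h, hk2]))
    · intro h; exact absurd (Finset.mem_range.2 hk) h

lemma aux_neg_one (p θ : ℕ) [Fact p.Prime] (hp8 : p % 8 = 5)
    (hθ : IsPrimitiveRoot (θ : ZMod p) (p - 1))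
    (χ : MulChar (ZMod p) ℂ) (hχ : χ (θ : ZMod p) = Complex.I) : χ (-1) = -1 := by
  have h : (θ : ZMod p) ^ ((p - 1) / 2) = -1 := by
    have h2 : ((θ : ZMod p) ^ ((p - 1) / 2)) ^ 2 = 1 := by
      rw [← pow_mul, show (p - 1) / 2 * 2 = p - 1 by omega, hθ.pow_eq_one]
    rcases sq_eq_one_iff.1 h2 with h | h
    · exact absurd h (hθ.pow_ne_one_of_pos_of_lt (by omega) (by omega))
    · exact h
  rw [← h, map_pow, hχ, aux_I4, show (p - 1) / 2 % 4 = 2 by omega, Complex.I_sq]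

lemma aux_gauss (p θ : ℕ) [Fact p.Prime] (hp8 : p % 8 = 5)
    (hθ : IsPrimitiveRoot (θ : ZMod p) (p - 1))
    (χ : MulChar (ZMod p) ℂ) (hχ : χ (θ : ZMod p) = Complex.I) (ζ : ℂ) (hζ : ζ ^ p = 1)
    (m : ℕ) (hm : m ≠ 0) :
    gaussSum (χ ^ m) (AddChar.zmodChar p hζ) =
      ∑ i ∈ Finset.range 4, (Complex.I ^ i) ^ m * ∑ t ∈ cycD p θ i, ζ ^ t := by
  unfold gaussSum
  rw [aux_decomp p θ hp8 hθ χ hχ _ (by simp [MulChar.map_zero])]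
  refine Finset.sum_congr rfl fun i hi => ?_
  rw [Finset.mul_sum]
  refine Finset.sum_congr rfl fun t ht => ?_
  rw [AddChar.zmodChar_apply', MulChar.pow_apply' _ hm,
    ((aux_mem p θ hp8 hθ χ hχ i (by simpa using hi) t).1 ht).2]

lemma aux_sum (p θ : ℕ) [Fact p.Prime] (hp8 : p % 8 = 5)
    (hθ : IsPrimitiveRoot (θ : ZMod p) (p - 1))
    (χ : MulChar (ZMod p) ℂ) (hχ : χ (θ : ZMod p) = Complex.I) (ζ : ℂ)
    (hζ : IsPrimitiveRoot ζ p) :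
    1 + ∑ i ∈ Finset.range 4, ∑ t ∈ cycD p θ i, ζ ^ t = 0 := by
  have hpp : p.Prime := Fact.out
  have h := aux_decomp p θ hp8 hθ χ hχ
    (fun u => AddChar.zmodChar p hζ.pow_eq_one u - if u = 0 then 1 else 0) (by simp)
  rw [Finset.sum_sub_distrib, aux_sum_range] at h
  simp only [AddChar.zmodChar_apply', hζ.geom_sum_eq_zero hpp.one_lt] at h
  simp only [Finset.sum_ite_eq', Finset.mem_univ, if_true] at h
  have h2 : ∀ i ∈ Finset.range 4, ∑ t ∈ cycD p θ i, (ζ ^ t - if (t : ZMod p) = 0 then 1 else 0)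
      = ∑ t ∈ cycD p θ i, ζ ^ t := by
    intro i hi
    refine Finset.sum_congr rfl fun t ht => ?_
    have := ((aux_mem p θ hp8 hθ χ hχ i (by simpa using hi) t).1 ht).2
    rw [if_neg, sub_zero]
    intro h0
    rw [h0, MulChar.map_zero] at this
    exact pow_ne_zero _ Complex.I_ne_zero this.symm
  rw [Finset.sum_congr rfl h2] at h
  rw [← h]; ring

lemma aux_card (p θ : ℕ) [Fact p.Prime] (hp8 : p % 8 = 5)
    (hθ : IsPrimitiveRoot (θ : ZMod p) (p - 1))
    (χ : MulChar (ZMod p) ℂ) (hχ : χ (θ : ZMod p) = Complex.I) :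
    16 * (((cycD p θ 0).filter (fun a => (a + 1) % p ∈ cycD p θ 1)).card : ℂ) =
    ∑ u : ZMod p, ((1 : MulChar (ZMod p) ℂ) u + χ u + (χ ^ 2) u + (χ ^ 3) u) *
      ((1 : MulChar (ZMod p) ℂ) (u + 1) - Complex.I * χ (u + 1) - (χ ^ 2) (u + 1)
        + Complex.I * (χ ^ 3) (u + 1)) := by
  have hp0 : 0 < p := (Fact.out : p.Prime).pos
  have hone : ∀ u : ZMod p, u ≠ 0 → (1 : MulChar (ZMod p) ℂ) u = 1 := fun u hu =>
    MulChar.one_apply (IsUnit.mk0 u hu)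
  have hI3 : Complex.I ^ 3 = - Complex.I := Complex.I_pow_three
  have e1 : ∀ v : ZMod p, ((1 : MulChar (ZMod p) ℂ) v - Complex.I * χ v - (χ ^ 2) v
        + Complex.I * (χ ^ 3) v) = if χ v = Complex.I ^ 1 then 4 else 0 := by
    intro v
    by_cases hv : v = 0
    · subst hv
      rw [if_neg]
      · simp [MulChar.map_zero]
      · rw [MulChar.map_zero, pow_one]; exact Complex.I_ne_zero.symm
    · obtain ⟨k, hk, hk2⟩ := aux_val p θ hθ χ hχ v hv
      rw [hone v hv, MulChar.pow_apply' _ two_ne_zero, MulChar.pow_apply' _ three_ne_zero, hk2]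
      have : (Complex.I ^ k = Complex.I ^ 1) ↔ k = 1 :=
        ⟨aux_Iinj k 1 hk (by norm_num), fun h => by rw [h]⟩
      simp only [this]
      interval_cases k <;> simp [hI3] <;> ring_nf <;> simp [hI3, Complex.I_sq] <;> norm_num
  have e0 : ∀ i ∈ Finset.range 4, ∀ t ∈ cycD p θ i, ((1 : MulChar (ZMod p) ℂ) (t : ZMod p) +
      χ t + (χ ^ 2) t + (χ ^ 3) t) = if i = 0 then 4 else 0 := by
    intro i hi t ht
    have h := ((aux_mem p θ hp8 hθ χ hχ i (by simpa using hi) t).1 ht).2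
    have hv : (t : ZMod p) ≠ 0 := by
      intro h0
      rw [h0, MulChar.map_zero] at h
      exact pow_ne_zero _ Complex.I_ne_zero h.symm
    rw [hone _ hv, MulChar.pow_apply' _ two_ne_zero, MulChar.pow_apply' _ three_ne_zero, h]
    have hi4 : i < 4 := by simpa using hi
    clear hi ht h
    interval_cases i <;> simp [hI3] <;> ring_nf <;> simp [hI3] <;> norm_num
  simp only [e1]
  rw [aux_decomp p θ hp8 hθ χ hχ _ (by simp [MulChar.map_zero])]
  have e2 : ∀ i ∈ Finset.range 4, ∑ t ∈ cycD p θ i, ((1 : MulChar (ZMod p) ℂ) (t : ZMod p) +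
      χ t + (χ ^ 2) t + (χ ^ 3) t) * (if χ ((t : ZMod p) + 1) = Complex.I ^ 1 then 4 else 0)
      = if i = 0 then 16 * (((cycD p θ 0).filter (fun a => (a + 1) % p ∈ cycD p θ 1)).card : ℂ)
        else 0 := by
    intro i hi
    split_ifs with h0
    · subst h0
      rw [Finset.card_filter]
      push_cast
      rw [Finset.mul_sum]
      refine Finset.sum_congr rfl fun t ht => ?_
      rw [e0 0 hi t ht]
      have : (t + 1) % p ∈ cycD p θ 1 ↔ χ ((t : ZMod p) + 1) = Complex.I ^ 1 := by
        rw [aux_mem p θ hp8 hθ χ hχ 1 (by norm_num), ZMod.natCast_mod]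
        push_cast
        exact and_iff_right (Nat.mod_lt _ hp0)
      simp only [this]
      split_ifs <;> norm_num
    · refine Finset.sum_eq_zero fun t ht => ?_
      rw [e0 i hi t ht, if_neg h0, zero_mul]
  rw [Finset.sum_congr rfl e2]
  simp

lemma aux_conj (p : ℕ) [Fact p.Prime] (χ : MulChar (ZMod p) ℂ) :
    jacobiSum χ⁻¹ χ⁻¹ = (starRingEnd ℂ) (jacobiSum χ χ) := by
  simp only [jacobiSum, map_sum, map_mul]
  refine Finset.sum_congr rfl fun u _ => ?_
  simp only [← MulChar.star_apply', starRingEnd_apply]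

lemma aux_adj (z : ℂ) (hz : z ∈ Algebra.adjoin ℤ {Complex.I}) :
    ∃ a b : ℤ, z = a + b * Complex.I := by
  induction hz using Algebra.adjoin_induction with
  | mem x hx => exact ⟨0, 1, by simp_all⟩
  | algebraMap r => exact ⟨r, 0, by simp⟩
  | add x y _ _ hx hy =>
    obtain ⟨a, b, rfl⟩ := hx
    obtain ⟨c, d, rfl⟩ := hy
    exact ⟨a + c, b + d, by push_cast; ring⟩
  | mul x y _ _ hx hy =>
    obtain ⟨a, b, rfl⟩ := hx
    obtain ⟨c, d, rfl⟩ := hy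
    refine ⟨a * c - b * d, a * d + b * c, ?_⟩
    push_cast
    linear_combination (b * d : ℂ) * Complex.I_sq

lemma aux_jac (p : ℕ) [Fact p.Prime] (χ : MulChar (ZMod p) ℂ) (h4 : χ ^ 4 = 1) (h2 : χ ^ 2 ≠ 1)
    (hn : χ (-1) = -1) (ψ : AddChar (ZMod p) ℂ) (hψ : ψ.IsPrimitive) :
    ∃ a b : ℤ, gaussSum χ ψ * gaussSum (χ ^ 3) ψ = -p ∧ gaussSum (χ ^ 2) ψ ^ 2 = p ∧
      gaussSum χ ψ ^ 2 = (a + b * Complex.I) * gaussSum (χ ^ 2) ψ ∧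
      gaussSum (χ ^ 3) ψ ^ 2 = (a - b * Complex.I) * gaussSum (χ ^ 2) ψ ∧
      (p : ℤ) = a ^ 2 + b ^ 2 ∧
      ∑ u : ZMod p, ((1 : MulChar (ZMod p) ℂ) u + χ u + (χ ^ 2) u + (χ ^ 3) u) *
      ((1 : MulChar (ZMod p) ℂ) (u + 1) - Complex.I * χ (u + 1) - (χ ^ 2) (u + 1)
        + Complex.I * (χ ^ 3) (u + 1)) = p + 1 - 2 * a - 4 * b := by
  have hpC : (p : ℂ) ≠ 0 := by exact_mod_cast (Fact.out : p.Prime).ne_zero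
  have h1 : χ ≠ 1 := by rintro rfl; simp at h2
  have h3 : χ ^ 3 ≠ 1 := by
    intro h; apply h1; rw [pow_succ, h, one_mul] at h4; exact h4
  have i1 : χ⁻¹ = χ ^ 3 := inv_eq_of_mul_eq_one_right (by rw [← pow_succ', h4])
  have i2 : (χ ^ 2)⁻¹ = χ ^ 2 := inv_eq_of_mul_eq_one_right (by rw [← pow_add, h4])
  have i3 : (χ ^ 3)⁻¹ = χ := inv_eq_of_mul_eq_one_right (by rw [← pow_succ, h4])
  have n2 : (χ ^ 2) (-1) = 1 := by rw [MulChar.pow_apply' _ two_ne_zero, hn]; norm_num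
  have n3 : (χ ^ 3) (-1) = -1 := by rw [MulChar.pow_apply' _ three_ne_zero, hn]; norm_num
  have hI : IsPrimitiveRoot Complex.I 4 := by
    exact IsPrimitiveRoot.mk_of_lt _ (by norm_num) (by simp) (by
      intro l h0 h4
      interval_cases l <;> simp [Complex.ext_iff, pow_succ] <;> norm_num)
  obtain ⟨a, b, hab⟩ := aux_adj _ (jacobiSum_mem_algebraAdjoin_of_pow_eq_one h4 h4 hI)
  have hab' : jacobiSum (χ ^ 3) (χ ^ 3) = a - b * Complex.I := by
    rw [← i1, aux_conj, hab]; simp [sub_eq_add_neg]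
  have g1 : gaussSum χ ψ * gaussSum (χ ^ 3) ψ = -p := by
    have := gaussSum_mul_gaussSum_eq_card h1 hψ
    rw [i1, ZMod.card] at this
    rw [← mul_gaussSum_inv_eq_gaussSum (χ ^ 3) ψ, n3, ← this]; ring
  have g2 : gaussSum (χ ^ 2) ψ ^ 2 = p := by
    have := gaussSum_mul_gaussSum_eq_card h2 hψ
    rw [i2, ZMod.card] at this
    have h := mul_gaussSum_inv_eq_gaussSum (χ ^ 2) ψ
    rw [n2, one_mul] at h
    rw [h] at this
    rw [← this]; ring
  have e33 : χ ^ 3 * χ ^ 3 = χ ^ 2 := by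
    rw [← pow_add, show 3 + 3 = 4 + 2 by norm_num, pow_add, h4, one_mul]
  have g3 : gaussSum χ ψ ^ 2 = (a + b * Complex.I) * gaussSum (χ ^ 2) ψ := by
    have := jacobiSum_mul_nontrivial (χ := χ) (φ := χ) (by rwa [← pow_two]) ψ
    rw [← pow_two, hab] at this
    rw [pow_two, ← this]; ring
  have g4 : gaussSum (χ ^ 3) ψ ^ 2 = (a - b * Complex.I) * gaussSum (χ ^ 2) ψ := by
    have := jacobiSum_mul_nontrivial (χ := χ ^ 3) (φ := χ ^ 3) (by rwa [e33]) ψ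
    rw [e33, hab'] at this
    rw [pow_two, ← this]; ring
  have j12 : jacobiSum χ (χ ^ 2) = -(a + b * Complex.I) := by
    have := jacobiSum_mul_nontrivial (χ := χ) (φ := χ ^ 2) (by rwa [← pow_succ']) ψ
    rw [← pow_succ'] at this
    norm_num at this
    apply mul_left_cancel₀ hpC
    linear_combination (-gaussSum χ ψ) * this + (jacobiSum χ (χ ^ 2)) * g1
      - gaussSum (χ ^ 2) ψ * g3 - (a + b * Complex.I) * g2
  have j32 : jacobiSum (χ ^ 3) (χ ^ 2) = -(a - b * Complex.I) := by
    have e : χ ^ 3 * χ ^ 2 = χ := by rw [← pow_add, pow_succ, h4, one_mul]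
    have := jacobiSum_mul_nontrivial (χ := χ ^ 3) (φ := χ ^ 2) (by rwa [e]) ψ
    rw [e] at this
    apply mul_left_cancel₀ hpC
    linear_combination (-gaussSum (χ ^ 3) ψ) * this + (jacobiSum (χ ^ 3) (χ ^ 2)) * g1
      - gaussSum (χ ^ 2) ψ * g4 - (a - b * Complex.I) * g2
  have j13 : jacobiSum χ (χ ^ 3) = 1 := by
    have := jacobiSum_nontrivial_inv h1
    rw [i1, hn] at this; simpa using this
  have j22 : jacobiSum (χ ^ 2) (χ ^ 2) = -1 := by
    have := jacobiSum_nontrivial_inv h2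
    rwa [i2, n2] at this
  have j00 : jacobiSum (1 : MulChar (ZMod p) ℂ) 1 = p - 2 := by
    rw [jacobiSum_one_one, ZMod.card]
  have k1 : jacobiSum 1 χ = -1 := jacobiSum_one_nontrivial h1
  have k2 : jacobiSum 1 (χ ^ 2) = -1 := jacobiSum_one_nontrivial h2
  have k3 : jacobiSum 1 (χ ^ 3) = -1 := jacobiSum_one_nontrivial h3
  refine ⟨a, b, g1, g2, g3, g4, ?_, ?_⟩
  · have : (p : ℂ) = a ^ 2 + b ^ 2 := by
      apply mul_left_cancel₀ hpC
      have h : (gaussSum χ ψ * gaussSum (χ ^ 3) ψ) ^ 2 = (p : ℂ) * p := by rw [g1]; ring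
      rw [← h, mul_pow, g3, g4, ← g2]
      linear_combination (-b ^ 2 * gaussSum (χ ^ 2) ψ ^ 2) * Complex.I_sq
    exact_mod_cast this
  · rw [← Equiv.sum_comp (Equiv.neg (ZMod p))]
    have key : ∀ u : ZMod p, ∀ φ : MulChar (ZMod p) ℂ, φ (-u) = φ (-1) * φ u := by
      intro u φ; rw [← map_mul]; simp
    have hm1 : (1 : MulChar (ZMod p) ℂ) (-1) = 1 := MulChar.one_apply (by simp)
    have ex : ∀ u : ZMod p, ((1 : MulChar (ZMod p) ℂ) (-u) + χ (-u) + (χ ^ 2) (-u) + (χ ^ 3) (-u)) *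
      ((1 : MulChar (ZMod p) ℂ) (-u + 1) - Complex.I * χ (-u + 1) - (χ ^ 2) (-u + 1)
        + Complex.I * (χ ^ 3) (-u + 1)) =
      ((1 : MulChar (ZMod p) ℂ) u - χ u + (χ ^ 2) u - (χ ^ 3) u) *
      ((1 : MulChar (ZMod p) ℂ) (1 - u) - Complex.I * χ (1 - u) - (χ ^ 2) (1 - u)
        + Complex.I * (χ ^ 3) (1 - u)) := by
      intro u
      rw [key u 1, key u χ, key u (χ ^ 2), key u (χ ^ 3), hm1, hn, n2, n3, neg_add_eq_sub]
      ring
    simp only [Equiv.neg_apply, ex]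
    have tot : ∑ u : ZMod p, ((1 : MulChar (ZMod p) ℂ) u - χ u + (χ ^ 2) u - (χ ^ 3) u) *
      ((1 : MulChar (ZMod p) ℂ) (1 - u) - Complex.I * χ (1 - u) - (χ ^ 2) (1 - u)
        + Complex.I * (χ ^ 3) (1 - u)) =
      jacobiSum (1 : MulChar (ZMod p) ℂ) 1 - Complex.I * jacobiSum 1 χ - jacobiSum 1 (χ ^ 2)
        + Complex.I * jacobiSum 1 (χ ^ 3)
      - (jacobiSum χ 1 - Complex.I * jacobiSum χ χ - jacobiSum χ (χ ^ 2)
        + Complex.I * jacobiSum χ (χ ^ 3))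
      + (jacobiSum (χ ^ 2) 1 - Complex.I * jacobiSum (χ ^ 2) χ - jacobiSum (χ ^ 2) (χ ^ 2)
        + Complex.I * jacobiSum (χ ^ 2) (χ ^ 3))
      - (jacobiSum (χ ^ 3) 1 - Complex.I * jacobiSum (χ ^ 3) χ - jacobiSum (χ ^ 3) (χ ^ 2)
        + Complex.I * jacobiSum (χ ^ 3) (χ ^ 3)) := by
      simp only [jacobiSum, Finset.mul_sum, ← Finset.sum_sub_distrib, ← Finset.sum_add_distrib]
      refine Finset.sum_congr rfl fun u _ => ?_
      ring
    rw [tot, jacobiSum_comm χ 1, jacobiSum_comm (χ ^ 2) 1, jacobiSum_comm (χ ^ 3) 1,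
      jacobiSum_comm (χ ^ 2) χ, jacobiSum_comm (χ ^ 3) χ, jacobiSum_comm (χ ^ 2) (χ ^ 3),
      j00, k1, k2, k3,
      j12, j13, j22, j32, hab, hab']
    linear_combination (4 * b : ℂ) * Complex.I_sq

lemma aux_unique (p : ℕ) (hp : p.Prime) (hp8 : p % 8 = 5)
    (x y a b n : ℤ) (hx : x % 4 = 1) (hxy : (p : ℤ) = x ^ 2 + 4 * y ^ 2)
    (hab : (p : ℤ) = a ^ 2 + b ^ 2) (h1 : 16 * n = (p : ℤ) + 1 + 2 * x - 8 * y)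
    (h2 : 16 * n = (p : ℤ) + 1 - 2 * a - 4 * b) : b = 2 * y := by
  have hpm : (p : ℤ) % 8 = 5 := by omega
  have ha2 : a % 2 = 1 := by omega
  have hb2 : b % 2 = 0 := by
    rcases Int.emod_two_eq_zero_or_one b with h | h
    · exact h
    · exfalso
      obtain ⟨c, rfl⟩ : ∃ c, a = 2 * c + 1 := ⟨a / 2, by omega⟩
      obtain ⟨d, rfl⟩ : ∃ d, b = 2 * d + 1 := ⟨b / 2, by omega⟩
      have : (p : ℤ) = 2 * (2 * c ^ 2 + 2 * c + 2 * d ^ 2 + 2 * d + 1) := by rw [hab]; ring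
      omega
  obtain ⟨c, rfl⟩ : ∃ c, b = 2 * c := ⟨b / 2, by omega⟩
  have ha4 : a % 4 = 3 := by omega
  have hp0 : (0 : ℤ) < p := by exact_mod_cast hp.pos
  have hpp : Prime (p : ℤ) := Nat.prime_iff_prime_int.1 hp
  have small : ∀ w v : ℤ, (p : ℤ) ^ 2 = v ^ 2 + 4 * w ^ 2 → (p : ℤ) ∣ w → w = 0 := by
    rintro w v h ⟨k, rfl⟩
    by_contra hne
    have hk : k ≠ 0 := by rintro rfl; simp at hne
    have hk2 : 1 ≤ k ^ 2 := by have := sq_pos_of_ne_zero hk; omega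
    nlinarith [sq_nonneg v, mul_le_mul_of_nonneg_left hk2 (sq_nonneg (p : ℤ)), pow_pos hp0 2]
  have hprod : (x * c - a * y) * (x * c + a * y) = p * (c ^ 2 - y ^ 2) := by
    linear_combination (-c ^ 2) * hxy + y ^ 2 * hab
  have hd : (p : ℤ) ∣ (x * c - a * y) * (x * c + a * y) := ⟨_, hprod⟩
  have hz : (x * c - a * y) * (x * c + a * y) = 0 := by
    rcases hpp.dvd_or_dvd hd with h | h
    · rw [small _ (x * a + 4 * y * c) (by
        linear_combination (p : ℤ) * hab + (a ^ 2 + (2 * c) ^ 2) * hxy) h, zero_mul]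
    · rw [small (x * c + a * y) (x * a - 4 * y * c) (by
        linear_combination (p : ℤ) * hab + (a ^ 2 + (2 * c) ^ 2) * hxy) h, mul_zero]
  rw [hz] at hprod
  have hcy : c ^ 2 = y ^ 2 := by
    rcases mul_eq_zero.1 hprod.symm with h | h
    · omega
    · linarith
  have hax : a ^ 2 = x ^ 2 := by linarith [mul_pow 2 c 2]
  rcases sq_eq_sq_iff_eq_or_eq_neg.1 hax with h | h
  · omega
  · omega

lemma aux_dvd (p : ℕ) (hp : p.Prime) (ζ : ℂ) (hζ : IsPrimitiveRoot ζ p) (P : Polynomial ℤ)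
    (hP : Polynomial.aeval ζ P = 0) : ((4 : ℤ) ^ p - 1) / 3 ∣ P.eval 4 := by
  have hd : Polynomial.cyclotomic p ℤ ∣ P := by
    rw [Polynomial.cyclotomic_eq_minpoly hζ hp.pos]
    exact minpoly.isIntegrallyClosed_dvd (hζ.isIntegral hp.pos) hP
  have he := Polynomial.eval_dvd (x := (4 : ℤ)) hd
  have : Fact p.Prime := ⟨hp⟩
  rw [Polynomial.cyclotomic_prime, Polynomial.eval_finsetSum] at he
  simp only [Polynomial.eval_pow, Polynomial.eval_X] at he
  have hg := mul_geom_sum (4 : ℤ) p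
  have : ((4 : ℤ) ^ p - 1) / 3 = ∑ i ∈ Finset.range p, (4 : ℤ) ^ i := by
    rw [← hg]; norm_num
  rwa [this]

lemma aux_complex (p : ℕ) (hp : p.Prime) (hp8 : p % 8 = 5)
    (x y : ℤ) (hx : x % 4 = 1) (hxy : (p : ℤ) = x ^ 2 + 4 * y ^ 2)
    (θ : ℕ) (hθ : IsPrimitiveRoot (θ : ZMod p) (p - 1))
    (hy : 16 * (((cycD p θ 0).filter (fun a => (a + 1) % p ∈ cycD p θ 1)).card : ℤ)
        = (p : ℤ) + 1 + 2 * x - 8 * y) (ζ : ℂ) (hζ : IsPrimitiveRoot ζ p)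
    (s : ℕ → ℂ) (hs : ∀ i, s i = ∑ t ∈ cycD p θ i, ζ ^ t) :
    4 * (1 + s 1 + 2 * s 0 + 3 * s 3) * (1 + s 3 + 2 * s 2 + 3 * s 1)
      - (2 * (1 + 4 * y) * (s 0 + s 2 - s 1 - s 3) + 5 * p + 1) = 0 := by
  have : Fact p.Prime := ⟨hp⟩
  obtain ⟨χ, hχ⟩ := aux_chi p θ hp8 hθ
  have hn := aux_neg_one p θ hp8 hθ χ hχ
  have h2 : χ ^ 2 ≠ 1 := by
    intro h
    have h' : (χ ^ 2) (θ : ZMod p) = 1 := by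
      rw [h]; exact MulChar.one_apply (IsUnit.mk0 _ (hθ.ne_zero (by omega)))
    rw [MulChar.pow_apply' _ two_ne_zero, hχ, Complex.I_sq] at h'
    norm_num at h'
  have h4 : χ ^ 4 = 1 := by
    ext u
    obtain ⟨k, -, hk⟩ := aux_val p θ hθ χ hχ u u.ne_zero
    rw [MulChar.pow_apply' _ four_ne_zero, MulChar.one_apply u.isUnit, hk, ← pow_mul, mul_comm,
      pow_mul, Complex.I_pow_four, one_pow]
  obtain ⟨a, b, q1, q2, q3, q4, q5, q6⟩ := aux_jac p χ h4 h2 hn _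
    (AddChar.zmodChar_primitive_of_primitive_root p hζ)
  rw [← aux_card p θ hp8 hθ χ hχ] at q6
  have hb : b = 2 * y := aux_unique p hp hp8 x y a b _ hx hxy q5 hy (by exact_mod_cast q6)
  have hS := aux_sum p θ hp8 hθ χ hχ ζ hζ
  have G1 := aux_gauss p θ hp8 hθ χ hχ ζ hζ.pow_eq_one 1 one_ne_zero
  have G2 := aux_gauss p θ hp8 hθ χ hχ ζ hζ.pow_eq_one 2 two_ne_zero
  have G3 := aux_gauss p θ hp8 hθ χ hχ ζ hζ.pow_eq_one 3 three_ne_zero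
  rw [pow_one] at G1
  rw [G1, G3] at q1
  rw [G2] at q2
  rw [G1, G2] at q3
  rw [G3, G2] at q4
  simp only [← hs, Finset.sum_range_succ, Finset.sum_range_zero] at q1 q2 q3 q4 hS
  have c2 : (Complex.I) ^ 2 = -1 := Complex.I_sq
  have c3 : (Complex.I) ^ 3 = -Complex.I := Complex.I_pow_three
  have m3 : (-Complex.I) ^ 3 = Complex.I := by
    rw [Odd.neg_pow (by decide), c3, neg_neg]
  have m1 : (-1 : ℂ) ^ 3 = -1 := by norm_num
  simp only [pow_zero, one_pow, pow_one, c2, c3, zero_add, one_mul, neg_one_sq, neg_sq, m3, m1] at q1 q2 q3 q4 hS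
  generalize s 0 = s0 at *
  generalize s 1 = s1 at *
  generalize s 2 = s2 at *
  generalize s 3 = s3 at *
  have hI0 := Complex.I_ne_zero
  have hbC : (b : ℂ) = 2 * y := by exact_mod_cast hb
  have r1 : (s0 - s2) ^ 2 + (s1 - s3) ^ 2 = -p := by
    rw [← q1]; ring_nf; simp only [c2, c3, Complex.I_pow_four]; ring
  have r2 : (s0 + s2 - s1 - s3) ^ 2 = p := by
    linear_combination q2
  have r3 : (s0 - s2) * (s1 - s3) = y * (s0 + s2 - s1 - s3) := by
    apply mul_left_cancel₀ (mul_ne_zero (show (4 : ℂ) ≠ 0 by norm_num) hI0)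
    linear_combination q3 - q4 + 2 * Complex.I * (s0 + s2 - s1 - s3) * hbC
  have r0 : s0 = -1 - s1 - s2 - s3 := by linear_combination hS
  rw [r0] at r1 r2 r3 ⊢
  linear_combination (-4) * r1 + 8 * r3 + r2

theorem lemma5_part7
    (p : ℕ) (hp : p.Prime) (hp8 : p % 8 = 5)
    (x y : ℤ) (hx : x % 4 = 1) (hxy : (p : ℤ) = x ^ 2 + 4 * y ^ 2)
    (θ : ℕ) (hθ : IsPrimitiveRoot (θ : ZMod p) (p - 1))
    (hy : 16 * (((cycD p θ 0).filter (fun a => (a + 1) % p ∈ cycD p θ 1)).card : ℤ)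
        = (p : ℤ) + 1 + 2 * x - 8 * y)
    :
    4 * (1 + eta4 p θ 1 + 2 * eta4 p θ 0 + 3 * eta4 p θ 3) * (1 + eta4 p θ 3 + 2 * eta4 p θ 2 + 3 * eta4 p θ 1)
      ≡ 2 * (1 + 4 * y) * Hval p θ + 5 * (p : ℤ) + 1 [ZMOD ((4 : ℤ) ^ p - 1) / 3] := by
  have h := aux_dvd p hp _ (Complex.isPrimitiveRoot_exp p hp.ne_zero)
    (4 * (1 + (∑ t ∈ cycD p θ 1, Polynomial.X ^ t) + 2 * (∑ t ∈ cycD p θ 0, Polynomial.X ^ t)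
        + 3 * (∑ t ∈ cycD p θ 3, Polynomial.X ^ t))
      * (1 + (∑ t ∈ cycD p θ 3, Polynomial.X ^ t) + 2 * (∑ t ∈ cycD p θ 2, Polynomial.X ^ t)
        + 3 * (∑ t ∈ cycD p θ 1, Polynomial.X ^ t))
      - (2 * (1 + 4 * (y : Polynomial ℤ)) * ((∑ t ∈ cycD p θ 0, Polynomial.X ^ t)
          + (∑ t ∈ cycD p θ 2, Polynomial.X ^ t) - (∑ t ∈ cycD p θ 1, Polynomial.X ^ t)
          - (∑ t ∈ cycD p θ 3, Polynomial.X ^ t)) + 5 * (p : Polynomial ℤ) + 1))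
    (by
      have := aux_complex p hp hp8 x y hx hxy θ hθ hy _ (Complex.isPrimitiveRoot_exp p hp.ne_zero)
        _ (fun i => rfl)
      simpa [map_ofNat] using this)
  refine (Int.modEq_iff_dvd.2 ?_).symm
  unfold Hval eta4
  simpa [Polynomial.eval_finsetSum] using h
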